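/- Assume N = 2, and let S be an arbitrary invertible 2×2 complex matrix, with ξ₁, ξ₂ defined via S as in the context. Then (i) an element ω ∈ Ω satisfies dω = 0 if and only if ω ∼ a + Σ_α ξ₁^α a_α + Θ₁₂ b₁ + (Θ₁₁ − Θ₂₂) b₂ for some polynomials a, a₁, a₂, b₁, b₂ ∈ ℂ[ψ₂, χ₂]; and (ii) such a combination is ∼ 0 if and only if a = b₁ = b₂ = 0 and Σ_α ξ₁^α a_α = (ξ₁·ξ₂)·(ξ₂¹d₁ + ξ₂²d₂) for some polynomials d₁, d₂ ∈ ℂ[ψ₂, χ₂]. -/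

import Mathlib

/-!
D = 3 supersymmetry algebra cohomology.
`R3 N = ℂ[ψ₁,…,ψ_N, χ₁,…,χ_N]`, `Om3 N` is the free module with basis
`{1, c̃₁, c̃₂, c̃₃, c̃₁c̃₂, c̃₁c̃₃, c̃₂c̃₃, c̃₁c̃₂c̃₃}` (components 0,…,7), and
`d3` is the odd superderivation with `dc̃₁ = P`, `dc̃₂ = Q`, `dc̃₃ = S`, `d|_R = 0`.
-/

open MvPolynomial

noncomputable section

/-- The polynomial ring `ℂ[ψ₁,…,ψ_N, χ₁,…,χ_N]`; `Sum.inl i ↦ ψᵢ`, `Sum.inr i ↦ χᵢ`. -/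
abbrev R3 (N : ℕ) : Type := MvPolynomial (Fin N ⊕ Fin N) ℂ

/-- `Ω`: free `R3`-module with basis
`{1, c̃₁, c̃₂, c̃₃, c̃₁c̃₂, c̃₁c̃₃, c̃₂c̃₃, c̃₁c̃₂c̃₃}` (components 0,…,7). -/
abbrev Om3 (N : ℕ) : Type := Fin 8 → R3 N

/-- The ghost `ψᵢ`. -/
def ψ {N : ℕ} (i : Fin N) : R3 N := X (Sum.inl i)

/-- The ghost `χᵢ`. -/
def χ {N : ℕ} (i : Fin N) : R3 N := X (Sum.inr i)

/-- `P = Σ ψᵢ²`. -/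
def PP (N : ℕ) : R3 N := ∑ i, ψ i ^ 2

/-- `Q = Σ χᵢ²`. -/
def QQ (N : ℕ) : R3 N := ∑ i, χ i ^ 2

/-- `S = Σ ψᵢχᵢ`. -/
def SS (N : ℕ) : R3 N := ∑ i, ψ i * χ i

/-- The differential: the unique R-linear odd superderivation with
`dc̃₁ = P`, `dc̃₂ = Q`, `dc̃₃ = S` and `d|_R = 0`, written out in components:
`d(ω₀ + c̃₁ω₁ + c̃₂ω₂ + c̃₃ω₃ + c̃₁c̃₂ω₄ + c̃₁c̃₃ω₅ + c̃₂c̃₃ω₆ + c̃₁c̃₂c̃₃ω₇)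
 = Pω₁ + Qω₂ + Sω₃ + (Pc̃₂ − Qc̃₁)ω₄ + (Pc̃₃ − Sc̃₁)ω₅ + (Qc̃₃ − Sc̃₂)ω₆
   + (Pc̃₂c̃₃ − Qc̃₁c̃₃ + Sc̃₁c̃₂)ω₇`. -/
def d3 {N : ℕ} (ω : Om3 N) : Om3 N :=
  ![PP N * ω 1 + QQ N * ω 2 + SS N * ω 3,
    -(QQ N * ω 4) - SS N * ω 5,
    PP N * ω 4 - SS N * ω 6,
    PP N * ω 5 + QQ N * ω 6,
    SS N * ω 7,
    -(QQ N * ω 7),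
    PP N * ω 7,
    0]

/-- Embedding of `R` into `Ω` (coefficient of the basis element `1`). -/
def ofR3 {N : ℕ} (r : R3 N) : Om3 N := ![r, 0, 0, 0, 0, 0, 0, 0]

/-- `ω ∼ ω'` iff `ω − ω' = dρ` for some `ρ`. -/
def Equiv3 {N : ℕ} (ω ω' : Om3 N) : Prop := ∃ ρ, ω - ω' = d3 ρ

/-- The invariant `ξᵢ·ξⱼ = ψᵢχⱼ − χᵢψⱼ`. -/
def xidot {N : ℕ} (i j : Fin N) : R3 N := ψ i * χ j - χ i * ψ j

/-- `Θᵢⱼ = i(c̃₃(ψᵢχⱼ + ψⱼχᵢ) − c̃₁χᵢχⱼ − c̃₂ψᵢψⱼ)` as an element of `Ω`. -/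
def Theta {N : ℕ} (i j : Fin N) : Om3 N :=
  ![0,
    -(C Complex.I * (χ i * χ j)),
    -(C Complex.I * (ψ i * ψ j)),
    C Complex.I * (ψ i * χ j + ψ j * χ i),
    0, 0, 0, 0]

/-- The supersymmetry ghost `ξᵢ = (ψᵢ, iχᵢ)·S⁻¹` (row spinor, entries in `R`). -/
def xi3 {N : ℕ} (S : Matrix (Fin 2) (Fin 2) ℂ) (i : Fin N) (α : Fin 2) : R3 N :=
  C (S⁻¹ 0 α) * ψ i + C (Complex.I * S⁻¹ 1 α) * χ i

/-- `ϑᵢ = (i(c̃₃ψᵢ − c̃₁χᵢ), c̃₃χᵢ − c̃₂ψᵢ)·S⁻¹` (row spinor, entries in `Ω`). -/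
def theta3 {N : ℕ} (S : Matrix (Fin 2) (Fin 2) ℂ) (i : Fin N) (α : Fin 2) : Om3 N :=
  ![0,
    -(C (Complex.I * S⁻¹ 0 α) * χ i),
    -(C (S⁻¹ 1 α) * ψ i),
    C (Complex.I * S⁻¹ 0 α) * ψ i + C (S⁻¹ 1 α) * χ i,
    0, 0, 0, 0]

/-- The subring `ℂ[ψ₂, χ₂]` of `R3 2`. -/
def coefRing2 : Subalgebra ℂ (R3 2) :=
  MvPolynomial.supported ℂ ({Sum.inl 1, Sum.inr 1} : Set (Fin 2 ⊕ Fin 2))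

/-!
Since `(P, Q)` is a regular sequence, a cocycle `ω` satisfies `ω ∼ 0` if and only if its scalar
component lies in `(P, Q, S)` and its `c̃₃`-component, which always lies in `(P, Q) : S`, lies in
`(P, Q)`. For `N = 2` the quotient `R/(P, Q)` is free over `ℂ[ψ₂, χ₂]` on `1, ψ₁, χ₁, ψ₁χ₁`.
In this basis multiplication by `S` acts separately on the span of `1, ψ₁χ₁` and on the span of
`ψ₁, χ₁`, with rank one on each, so its image and its kernel can be read off; for instance
`S (ψ₁p − χ₁q) ≡ (ξ₁·ξ₂)(ψ₂p + χ₂q)` modulo `(P, Q)`. Passing from `ψᵢ, χᵢ` to the components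
of `ξᵢ` is an invertible linear change over `ℂ`.
-/

section Supported

variable {σ : Type*} {s t : Set σ}

lemma mem_supported_of_mul_mem_supported {R : Type*} [CommSemiring R] [NoZeroDivisors R]
    {p q : MvPolynomial σ R} (hp : p ≠ 0) (h : p * q ∈ supported R s) : q ∈ supported R s := by
  classical
  rcases eq_or_ne q 0 with rfl | hq
  · exact zero_mem _
  · rw [mem_supported, vars_def, degrees_mul_eq hp hq, Multiset.toFinset_add,
      Finset.coe_union] at h
    rw [mem_supported, vars_def]
    exact Set.subset_union_right.trans h

lemma isRelPrime_of_disjoint_supported {K : Type*} [Field K] {p q : MvPolynomial σ K}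
    (hst : Disjoint s t) (hp : p ∈ supported K s) (hq : q ∈ supported K t) (hp0 : p ≠ 0)
    (hq0 : q ≠ 0) : IsRelPrime p q := by
  rintro d ⟨p', rfl⟩ ⟨q', rfl⟩
  have hds : d ∈ supported K s :=
    mem_supported_of_mul_mem_supported (right_ne_zero_of_mul hp0) (mul_comm d p' ▸ hp)
  have hdt : d ∈ supported K t :=
    mem_supported_of_mul_mem_supported (right_ne_zero_of_mul hq0) (mul_comm d q' ▸ hq)
  have hvars : d.vars = ∅ := by
    rw [← Finset.coe_eq_empty]
    exact (hst.mono (mem_supported.1 hds) (mem_supported.1 hdt)).eq_bot_of_self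
  have hd : d = C (d.coeff 0) := vars_eq_empty_iff_eq_C.1 hvars
  have hd0 : d ≠ 0 := left_ne_zero_of_mul hp0
  rw [hd] at hd0 ⊢
  exact (isUnit_iff_ne_zero.2 fun h => hd0 (by rw [h, C_0])).map C

end Supported

lemma exists_syzygy_of_isRelPrime {R : Type*} [CommRing R] [NoZeroDivisors R]
    [DecompositionMonoid R] {p q a b : R} (hpq : IsRelPrime p q) (hq : q ≠ 0)
    (h : p * a + q * b = 0) : ∃ g, a = -(q * g) ∧ b = p * g := by
  have hdvd : q ∣ p * a := ⟨-b, by linear_combination h⟩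
  obtain ⟨g, rfl⟩ := hpq.symm.dvd_of_dvd_mul_left hdvd
  exact ⟨-g, by ring, mul_left_cancel₀ hq (by linear_combination h)⟩

lemma eq_zero_of_add_mul_eq_zero_of_sub_mul_eq_zero {R : Type*} [CommRing R] [NoZeroDivisors R]
    [NeZero (2 : R)] {r s w : R} (hw : w ≠ 0) (hadd : r + s * w = 0) (hsub : r - s * w = 0) :
    r = 0 ∧ s = 0 := by
  have h2 : (2 : R) ≠ 0 := NeZero.ne 2
  refine ⟨?_, ?_⟩
  · exact (mul_eq_zero.1 (show 2 * r = 0 by linear_combination hadd + hsub)).resolve_left h2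
  · exact (mul_eq_zero.1 (show 2 * w * s = 0 by linear_combination hadd - hsub)).resolve_left
      (mul_ne_zero h2 hw)

section Koszul

variable {N : ℕ}

lemma PP_mem_supported : PP N ∈ supported ℂ (Set.range Sum.inl) :=
  sum_mem fun i _ => pow_mem (X_mem_supported.2 (Set.mem_range_self i)) 2

lemma QQ_mem_supported : QQ N ∈ supported ℂ (Set.range Sum.inr) :=
  sum_mem fun i _ => pow_mem (X_mem_supported.2 (Set.mem_range_self i)) 2

lemma PP_ne_zero [NeZero N] : PP N ≠ 0 := fun h => by
  simpa [PP, ψ, NeZero.ne] using congrArg (eval fun _ => 1) h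

lemma QQ_ne_zero [NeZero N] : QQ N ≠ 0 := fun h => by
  simpa [QQ, χ, NeZero.ne] using congrArg (eval fun _ => 1) h

lemma isRelPrime_PP_QQ [NeZero N] : IsRelPrime (PP N) (QQ N) :=
  isRelPrime_of_disjoint_supported Set.isCompl_range_inl_range_inr.disjoint
    PP_mem_supported QQ_mem_supported PP_ne_zero QQ_ne_zero

/-- The ideal `(P, Q)`, in which the `c̃₃`-component of a coboundary lies. -/
def idealPQ (N : ℕ) : Ideal (R3 N) := Ideal.span {PP N, QQ N}

/-- The ideal `(P, Q, S)`, in which the scalar component of a coboundary lies. -/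
def idealPQS (N : ℕ) : Ideal (R3 N) := Ideal.span {SS N, PP N, QQ N}

lemma mem_idealPQ_iff {f : R3 N} : f ∈ idealPQ N ↔ ∃ g h, f = PP N * g + QQ N * h := by
  simp only [idealPQ, Ideal.mem_span_pair, mul_comm, eq_comm]

lemma mem_idealPQS_iff {f : R3 N} : f ∈ idealPQS N ↔ ∃ g, f - SS N * g ∈ idealPQ N := by
  rw [idealPQS, Ideal.mem_span_insert]
  constructor
  · rintro ⟨g, z, hz, rfl⟩
    exact ⟨g, by rwa [mul_comm, add_sub_cancel_left]⟩
  · rintro ⟨g, hg⟩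
    exact ⟨g, _, hg, by ring⟩

/-- The differential `d` as an `R`-linear map, for access to the linear-map API. -/
def d3LinearMap (N : ℕ) : Om3 N →ₗ[R3 N] Om3 N where
  toFun := d3
  map_add' ω ω' := by
    ext1 j
    fin_cases j <;> simp [d3] <;> ring
  map_smul' r ω := by
    ext1 j
    fin_cases j <;> simp [d3] <;> ring

lemma d3_zero : d3 (0 : Om3 N) = 0 := map_zero (d3LinearMap N)

lemma d3_sub (ω ω' : Om3 N) : d3 (ω - ω') = d3 ω - d3 ω' := map_sub (d3LinearMap N) ω ω'

lemma d3_d3 (ω : Om3 N) : d3 (d3 ω) = 0 := by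
  ext1 j
  fin_cases j <;> simp [d3] <;> ring

lemma d3_ofR3 (r : R3 N) : d3 (ofR3 r) = 0 := by
  ext1 j
  fin_cases j <;> simp [d3, ofR3]

lemma C_I_mul_C_I {σ : Type*} : (C Complex.I * C Complex.I : MvPolynomial σ ℂ) = -1 := by
  rw [← C_mul, Complex.I_mul_I, C_neg, C_1]

lemma Equiv3.d3_eq {ω ω' : Om3 N} : Equiv3 ω ω' → d3 ω = d3 ω' := by
  rintro ⟨ρ, hρ⟩
  rw [← sub_eq_zero, ← d3_sub, hρ, d3_d3]

lemma SS_mul_mem_idealPQ_of_d3_eq_zero {ω : Om3 N} (hω : d3 ω = 0) :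
    SS N * ω 3 ∈ idealPQ N := by
  have h0 : PP N * ω 1 + QQ N * ω 2 + SS N * ω 3 = 0 := congrFun hω 0
  exact mem_idealPQ_iff.2 ⟨-ω 1, -ω 2, by linear_combination h0⟩

lemma exists_top_primitive_of_d3_eq_zero [NeZero N] {ω : Om3 N} (hω : d3 ω = 0) :
    ω 7 = 0 ∧ ∃ g, ω 4 = SS N * g ∧ ω 5 = -(QQ N * g) ∧ ω 6 = PP N * g := by
  have h1 : -(QQ N * ω 4) - SS N * ω 5 = 0 := congrFun hω 1
  have h3 : PP N * ω 5 + QQ N * ω 6 = 0 := congrFun hω 3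
  have h6 : PP N * ω 7 = 0 := congrFun hω 6
  obtain ⟨g, h5g, h6g⟩ := exists_syzygy_of_isRelPrime isRelPrime_PP_QQ QQ_ne_zero h3
  refine ⟨(mul_eq_zero.1 h6).resolve_left PP_ne_zero, g, ?_, h5g, h6g⟩
  exact mul_left_cancel₀ QQ_ne_zero (by rw [h5g] at h1; linear_combination -h1)

lemma exists_eq_d3_iff [NeZero N] {ω : Om3 N} (hω : d3 ω = 0) :
    (∃ ρ, ω = d3 ρ) ↔ ω 0 ∈ idealPQS N ∧ ω 3 ∈ idealPQ N := by
  constructor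
  · rintro ⟨ρ, rfl⟩
    refine ⟨mem_idealPQS_iff.2 ⟨ρ 3, mem_idealPQ_iff.2 ⟨ρ 1, ρ 2, ?_⟩⟩,
      mem_idealPQ_iff.2 ⟨ρ 5, ρ 6, rfl⟩⟩
    exact add_sub_cancel_right _ _
  · rintro ⟨h0, h3⟩
    obtain ⟨ρ₃, h0⟩ := mem_idealPQS_iff.1 h0
    obtain ⟨ρ₁, ρ₂, h0⟩ := mem_idealPQ_iff.1 h0
    obtain ⟨ρ₅, ρ₆, h3⟩ := mem_idealPQ_iff.1 h3
    obtain ⟨h7, ρ₇, h4, h5, h6⟩ := exists_top_primitive_of_d3_eq_zero hω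
    have hd0 : PP N * ω 1 + QQ N * ω 2 + SS N * ω 3 = 0 := congrFun hω 0
    have hsyz : PP N * (ω 1 + SS N * ρ₅) + QQ N * (ω 2 + SS N * ρ₆) = 0 := by
      linear_combination hd0 - SS N * h3
    obtain ⟨ρ₄, h1, h2⟩ := exists_syzygy_of_isRelPrime isRelPrime_PP_QQ QQ_ne_zero hsyz
    refine ⟨![0, ρ₁, ρ₂, ρ₃, ρ₄, ρ₅, ρ₆, ρ₇], ?_⟩
    ext1 j
    fin_cases j
    · exact sub_eq_iff_eq_add.1 h0
    · exact eq_sub_of_add_eq h1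
    · exact eq_sub_of_add_eq h2
    · exact h3
    · exact h4
    · exact h5
    · exact h6
    · exact h7

theorem equiv3_iff [NeZero N] {ω ω' : Om3 N} (hω : d3 ω = 0) (hω' : d3 ω' = 0) :
    Equiv3 ω ω' ↔ ω 0 - ω' 0 ∈ idealPQS N ∧ ω 3 - ω' 3 ∈ idealPQ N :=
  exists_eq_d3_iff (by rw [d3_sub, hω, hω', sub_zero])

end Koszul

section Invariants

variable {N : ℕ}

lemma xidot_self (i : Fin N) : xidot i i = 0 := by
  rw [xidot]; ring

lemma xidot_swap (i j : Fin N) : xidot i j = -xidot j i := by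
  simp only [xidot]; ring

lemma d3_Theta (i j : Fin N) :
    d3 (Theta i j) = ofR3 (-(C Complex.I * ∑ k, xidot i k * xidot j k)) := by
  have hsum : ∑ k, xidot i k * xidot j k
      = χ i * χ j * PP N + ψ i * ψ j * QQ N - (ψ i * χ j + ψ j * χ i) * SS N := by
    simp only [xidot, PP, QQ, SS, Finset.mul_sum, ← Finset.sum_add_distrib,
      ← Finset.sum_sub_distrib]
    exact Finset.sum_congr rfl fun k _ => by ring
  rw [hsum]
  ext1 m
  fin_cases m
  · simp only [d3, Theta, ofR3, Fin.zero_eta, Matrix.cons_val]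
    ring
  all_goals simp [d3, Theta, ofR3]

lemma xi3_eq_vecMul (S : Matrix (Fin 2) (Fin 2) ℂ) (i : Fin N) :
    xi3 S i = Matrix.vecMul ![ψ i, C Complex.I * χ i] (S⁻¹.map C) := by
  ext1 α
  simp only [xi3, C_mul, Matrix.vecMul, dotProduct, Fin.sum_univ_two, Matrix.map_apply,
    Matrix.cons_val_zero, Matrix.cons_val_one]
  ring

lemma xi3_vecMul_map {S : Matrix (Fin 2) (Fin 2) ℂ} (hS : IsUnit S.det) (i : Fin N) :
    Matrix.vecMul (xi3 S i) (S.map C) = ![ψ i, C Complex.I * χ i] := by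
  rw [xi3_eq_vecMul, Matrix.vecMul_vecMul, ← Matrix.map_mul, Matrix.nonsing_inv_mul S hS,
    Matrix.map_one _ C_0 C_1, Matrix.vecMul_one]

variable (A : Subalgebra ℂ (R3 N)) {i : Fin N}

lemma exists_eq_of_xi3_combination (S : Matrix (Fin 2) (Fin 2) ℂ) {d₁ d₂ : R3 N} (hd₁ : d₁ ∈ A)
    (hd₂ : d₂ ∈ A) :
    ∃ b ∈ A, ∃ c ∈ A, xi3 S i 0 * d₁ + xi3 S i 1 * d₂ = b * ψ i + c * χ i := by
  have hC : ∀ z : ℂ, C z ∈ A := A.algebraMap_mem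
  refine ⟨C (S⁻¹ 0 0) * d₁ + C (S⁻¹ 0 1) * d₂,
    add_mem (mul_mem (hC _) hd₁) (mul_mem (hC _) hd₂),
    C (Complex.I * S⁻¹ 1 0) * d₁ + C (Complex.I * S⁻¹ 1 1) * d₂,
    add_mem (mul_mem (hC _) hd₁) (mul_mem (hC _) hd₂), ?_⟩
  simp only [xi3]
  ring

lemma exists_xi3_combination_eq {S : Matrix (Fin 2) (Fin 2) ℂ} (hS : IsUnit S.det) {b c : R3 N}
    (hb : b ∈ A) (hc : c ∈ A) :
    ∃ d₁ ∈ A, ∃ d₂ ∈ A, b * ψ i + c * χ i = xi3 S i 0 * d₁ + xi3 S i 1 * d₂ := by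
  have hC : ∀ z : ℂ, C z ∈ A := A.algebraMap_mem
  have hψ := congrFun (xi3_vecMul_map hS i) 0
  have hχ := congrFun (xi3_vecMul_map hS i) 1
  simp only [Matrix.vecMul, dotProduct, Fin.sum_univ_two, Matrix.map_apply,
    Matrix.cons_val_zero, Matrix.cons_val_one] at hψ hχ
  refine ⟨C (S 0 0) * b - C Complex.I * C (S 0 1) * c,
    sub_mem (mul_mem (hC _) hb) (mul_mem (mul_mem (hC _) (hC _)) hc),
    C (S 1 0) * b - C Complex.I * C (S 1 1) * c,
    sub_mem (mul_mem (hC _) hb) (mul_mem (mul_mem (hC _) (hC _)) hc), ?_⟩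
  linear_combination -b * hψ + c * C Complex.I * hχ + c * χ i * C_I_mul_C_I

lemma exists_xi3_combination_iff {S : Matrix (Fin 2) (Fin 2) ℂ} (hS : IsUnit S.det) (i : Fin N)
    (p : R3 N → Prop) :
    (∃ d₁ ∈ A, ∃ d₂ ∈ A, p (xi3 S i 0 * d₁ + xi3 S i 1 * d₂)) ↔
      ∃ b ∈ A, ∃ c ∈ A, p (b * ψ i + c * χ i) := by
  constructor
  · rintro ⟨d₁, hd₁, d₂, hd₂, h⟩
    obtain ⟨b, hb, c, hc, heq⟩ := exists_eq_of_xi3_combination A S hd₁ hd₂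
    exact ⟨b, hb, c, hc, heq ▸ h⟩
  · rintro ⟨b, hb, c, hc, h⟩
    obtain ⟨d₁, hd₁, d₂, hd₂, heq⟩ := exists_xi3_combination_eq A hS hb hc
    exact ⟨d₁, hd₁, d₂, hd₂, heq ▸ h⟩

end Invariants


section CoefRing

lemma ψ_one_mem_coefRing2 : ψ 1 ∈ coefRing2 := X_mem_supported.2 (Set.mem_insert _ _)

lemma χ_one_mem_coefRing2 : χ 1 ∈ coefRing2 :=
  X_mem_supported.2 (Set.mem_insert_of_mem _ (Set.mem_singleton _))

lemma C_mem_coefRing2 (z : ℂ) : C z ∈ coefRing2 := coefRing2.algebraMap_mem z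

lemma exists_of_ψ_one_mul_eq_χ_one_mul {b c : R3 2} (hb : b ∈ coefRing2)
    (h : ψ 1 * b = χ 1 * c) : ∃ k ∈ coefRing2, b = χ 1 * k ∧ c = ψ 1 * k := by
  have hrel : IsRelPrime (ψ 1 : R3 2) (χ 1) :=
    isRelPrime_of_disjoint_supported (s := {Sum.inl 1}) (t := {Sum.inr 1}) (by simp)
      (X_mem_supported.2 rfl) (X_mem_supported.2 rfl) (X_ne_zero _) (X_ne_zero _)
  obtain ⟨g, rfl, hc⟩ := exists_syzygy_of_isRelPrime hrel (X_ne_zero _)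
    (show ψ 1 * b + χ 1 * -c = 0 by linear_combination h)
  have hg : g ∈ coefRing2 :=
    mem_supported_of_mul_mem_supported (X_ne_zero _) (neg_mem_iff.1 hb)
  exact ⟨-g, neg_mem hg, by ring, by linear_combination -hc⟩

/-- The substitution `ψ₁ ↦ p`, `χ₁ ↦ q` fixing `ψ₂` and `χ₂`; it serves to evaluate at zeros
of `P` and `Q`. -/
def substFirst (p q : R3 2) : R3 2 →ₐ[ℂ] R3 2 := aeval (Sum.elim ![p, ψ 1] ![q, χ 1])

lemma substFirst_ψ_zero (p q : R3 2) : substFirst p q (ψ 0) = p := aeval_X _ _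

lemma substFirst_ψ_one (p q : R3 2) : substFirst p q (ψ 1) = ψ 1 := aeval_X _ _

lemma substFirst_χ_zero (p q : R3 2) : substFirst p q (χ 0) = q := aeval_X _ _

lemma substFirst_χ_one (p q : R3 2) : substFirst p q (χ 1) = χ 1 := aeval_X _ _

lemma substFirst_of_mem_coefRing2 (p q : R3 2) {a : R3 2} (ha : a ∈ coefRing2) :
    substFirst p q a = a := by
  refine AlgHom.adjoin_le_equalizer (substFirst p q) (AlgHom.id ℂ (R3 2)) ?_ ha
  rintro _ ⟨i, rfl | rfl, rfl⟩
  · exact substFirst_ψ_one p q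
  · exact substFirst_χ_one p q

end CoefRing

section NormalForm

/-- The normal form `a + b ψ₁ + c χ₁ + e ψ₁χ₁` of a polynomial modulo `(P, Q)`. -/
def normalForm (a b c e : R3 2) : R3 2 := a + b * ψ 0 + c * χ 0 + e * (ψ 0 * χ 0)

lemma PP_two : PP 2 = ψ 0 ^ 2 + ψ 1 ^ 2 := Fin.sum_univ_two _

lemma QQ_two : QQ 2 = χ 0 ^ 2 + χ 1 ^ 2 := Fin.sum_univ_two _

lemma SS_two : SS 2 = ψ 0 * χ 0 + ψ 1 * χ 1 := Fin.sum_univ_two _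

lemma normalForm_mul_ψ_zero_sub_mem_idealPQ (a b c e : R3 2) :
    normalForm a b c e * ψ 0 - normalForm (-(b * ψ 1 ^ 2)) a (-(e * ψ 1 ^ 2)) c ∈ idealPQ 2 :=
  mem_idealPQ_iff.2 ⟨b + e * χ 0, 0, by rw [normalForm, normalForm, PP_two]; ring⟩

lemma normalForm_mul_χ_zero_sub_mem_idealPQ (a b c e : R3 2) :
    normalForm a b c e * χ 0 - normalForm (-(c * χ 1 ^ 2)) (-(e * χ 1 ^ 2)) a b ∈ idealPQ 2 :=
  mem_idealPQ_iff.2 ⟨0, c + e * ψ 0, by rw [normalForm, normalForm, QQ_two]; ring⟩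

lemma SS_mul_normalForm_sub_mem_idealPQ (a b c e : R3 2) :
    SS 2 * normalForm a b c e - normalForm (ψ 1 * χ 1 * (a + ψ 1 * χ 1 * e))
      (χ 1 * (ψ 1 * b - χ 1 * c)) (-(ψ 1 * (ψ 1 * b - χ 1 * c))) (a + ψ 1 * χ 1 * e)
        ∈ idealPQ 2 :=
  mem_idealPQ_iff.2 ⟨b * χ 0 + e * χ 0 ^ 2, c * ψ 0 - e * ψ 1 ^ 2, by
    rw [normalForm, normalForm, PP_two, QQ_two, SS_two]; ring⟩

lemma exists_mul_sub_normalForm_mem_idealPQ {r f : R3 2} (hr : r ∈ coefRing2)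
    (hf : ∃ a ∈ coefRing2, ∃ b ∈ coefRing2, ∃ c ∈ coefRing2, ∃ e ∈ coefRing2,
      f - normalForm a b c e ∈ idealPQ 2) :
    ∃ a ∈ coefRing2, ∃ b ∈ coefRing2, ∃ c ∈ coefRing2, ∃ e ∈ coefRing2,
      f * r - normalForm a b c e ∈ idealPQ 2 := by
  obtain ⟨a, ha, b, hb, c, hc, e, he, hf⟩ := hf
  refine ⟨a * r, mul_mem ha hr, b * r, mul_mem hb hr, c * r, mul_mem hc hr,
    e * r, mul_mem he hr, ?_⟩
  convert Ideal.mul_mem_right r _ hf using 1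
  simp only [normalForm]
  ring

lemma exists_sub_normalForm_mem_idealPQ (f : R3 2) :
    ∃ a ∈ coefRing2, ∃ b ∈ coefRing2, ∃ c ∈ coefRing2, ∃ e ∈ coefRing2,
      f - normalForm a b c e ∈ idealPQ 2 := by
  induction f using MvPolynomial.induction_on with
  | C z =>
    refine ⟨C z, C_mem_coefRing2 z, 0, zero_mem _, 0, zero_mem _, 0, zero_mem _, ?_⟩
    simp [normalForm]
  | add f g hf hg =>
    obtain ⟨a, ha, b, hb, c, hc, e, he, hf⟩ := hf
    obtain ⟨a', ha', b', hb', c', hc', e', he', hg⟩ := hg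
    refine ⟨a + a', add_mem ha ha', b + b', add_mem hb hb', c + c', add_mem hc hc',
      e + e', add_mem he he', ?_⟩
    convert add_mem hf hg using 1
    simp only [normalForm]
    ring
  | mul_X f i hf =>
    obtain ⟨a, ha, b, hb, c, hc, e, he, hnf⟩ := id hf
    have hψ2 : ψ 1 ^ 2 ∈ coefRing2 := pow_mem ψ_one_mem_coefRing2 2
    have hχ2 : χ 1 ^ 2 ∈ coefRing2 := pow_mem χ_one_mem_coefRing2 2
    rcases i with i | i <;> fin_cases i
    · refine ⟨_, neg_mem (mul_mem hb hψ2), a, ha, _, neg_mem (mul_mem he hψ2), c, hc, ?_⟩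
      convert add_mem (Ideal.mul_mem_right (ψ 0) _ hnf)
        (normalForm_mul_ψ_zero_sub_mem_idealPQ a b c e) using 1
      simp only [ψ, Fin.zero_eta]
      ring
    · exact exists_mul_sub_normalForm_mem_idealPQ ψ_one_mem_coefRing2 hf
    · refine ⟨_, neg_mem (mul_mem hc hχ2), _, neg_mem (mul_mem he hχ2), a, ha, b, hb, ?_⟩
      convert add_mem (Ideal.mul_mem_right (χ 0) _ hnf)
        (normalForm_mul_χ_zero_sub_mem_idealPQ a b c e) using 1
      simp only [χ, Fin.zero_eta]
      ring
    · exact exists_mul_sub_normalForm_mem_idealPQ χ_one_mem_coefRing2 hf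

lemma substFirst_eq_zero_of_mem_idealPQ {p q f : R3 2} (hp : p ^ 2 + ψ 1 ^ 2 = 0)
    (hq : q ^ 2 + χ 1 ^ 2 = 0) (hf : f ∈ idealPQ 2) : substFirst p q f = 0 := by
  obtain ⟨g, h, rfl⟩ := mem_idealPQ_iff.1 hf
  simp only [PP_two, QQ_two, map_add, map_mul, map_pow, substFirst_ψ_zero, substFirst_ψ_one,
    substFirst_χ_zero, substFirst_χ_one, hp, hq, zero_mul, add_zero]

variable {a b c e : R3 2}

lemma substFirst_normalForm (ha : a ∈ coefRing2) (hb : b ∈ coefRing2) (hc : c ∈ coefRing2)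
    (he : e ∈ coefRing2) (p q : R3 2) :
    substFirst p q (normalForm a b c e) = (a + c * q) + (b + e * q) * p := by
  simp only [normalForm, map_add, map_mul, substFirst_of_mem_coefRing2 p q ha,
    substFirst_of_mem_coefRing2 p q hb, substFirst_of_mem_coefRing2 p q hc,
    substFirst_of_mem_coefRing2 p q he, substFirst_ψ_zero, substFirst_χ_zero]
  ring

/- A normal form lying in `(P, Q)` vanishes at the four zeros `ψ₁ = ±iψ₂`, `χ₁ = ±iχ₂` of `P` and
`Q`, which determines its coefficients. -/
lemma normalForm_mem_idealPQ_iff (ha : a ∈ coefRing2) (hb : b ∈ coefRing2) (hc : c ∈ coefRing2)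
    (he : e ∈ coefRing2) :
    normalForm a b c e ∈ idealPQ 2 ↔ a = 0 ∧ b = 0 ∧ c = 0 ∧ e = 0 := by
  have hI : (C Complex.I : R3 2) ^ 2 = -1 := by rw [sq, C_I_mul_C_I]
  have hI0 : (C Complex.I : R3 2) ≠ 0 := by simp
  constructor
  · intro h
    have eval_zero : ∀ p q, p ^ 2 + ψ 1 ^ 2 = 0 → q ^ 2 + χ 1 ^ 2 = 0 →
        (a + c * q) + (b + e * q) * p = 0 := fun p q hp hq => by
      rw [← substFirst_normalForm ha hb hc he, substFirst_eq_zero_of_mem_idealPQ hp hq h]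
    have eval_χ_zero : ∀ q, q ^ 2 + χ 1 ^ 2 = 0 → a + c * q = 0 ∧ b + e * q = 0 := fun q hq =>
      eq_zero_of_add_mul_eq_zero_of_sub_mul_eq_zero (w := C Complex.I * ψ 1)
        (mul_ne_zero hI0 (X_ne_zero _))
        (eval_zero _ q (by linear_combination ψ 1 ^ 2 * hI) hq)
        (by linear_combination eval_zero (-(C Complex.I * ψ 1)) q
              (by linear_combination ψ 1 ^ 2 * hI) hq)
    obtain ⟨hac, hbe⟩ := eval_χ_zero (C Complex.I * χ 1) (by linear_combination χ 1 ^ 2 * hI)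
    obtain ⟨hac', hbe'⟩ :=
      eval_χ_zero (-(C Complex.I * χ 1)) (by linear_combination χ 1 ^ 2 * hI)
    have hw : (C Complex.I * χ 1 : R3 2) ≠ 0 := mul_ne_zero hI0 (X_ne_zero _)
    obtain ⟨ha0, hc0⟩ :=
      eq_zero_of_add_mul_eq_zero_of_sub_mul_eq_zero hw hac (by linear_combination hac')
    obtain ⟨hb0, he0⟩ :=
      eq_zero_of_add_mul_eq_zero_of_sub_mul_eq_zero hw hbe (by linear_combination hbe')
    exact ⟨ha0, hb0, hc0, he0⟩
  · rintro ⟨rfl, rfl, rfl, rfl⟩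
    simp [normalForm]

lemma eq_of_normalForm_sub_SS_mul_normalForm_mem_idealPQ {a' b' c' e' : R3 2}
    (ha : a ∈ coefRing2) (hb : b ∈ coefRing2) (hc : c ∈ coefRing2) (he : e ∈ coefRing2)
    (ha' : a' ∈ coefRing2) (hb' : b' ∈ coefRing2) (hc' : c' ∈ coefRing2) (he' : e' ∈ coefRing2)
    (h : normalForm a' b' c' e' - SS 2 * normalForm a b c e ∈ idealPQ 2) :
    a' = ψ 1 * χ 1 * (a + ψ 1 * χ 1 * e) ∧ b' = χ 1 * (ψ 1 * b - χ 1 * c) ∧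
      c' = -(ψ 1 * (ψ 1 * b - χ 1 * c)) ∧ e' = a + ψ 1 * χ 1 * e := by
  have hψ := ψ_one_mem_coefRing2
  have hχ := χ_one_mem_coefRing2
  have hT : a + ψ 1 * χ 1 * e ∈ coefRing2 := add_mem ha (mul_mem (mul_mem hψ hχ) he)
  have hD : ψ 1 * b - χ 1 * c ∈ coefRing2 := sub_mem (mul_mem hψ hb) (mul_mem hχ hc)
  have hdiff : normalForm (a' - ψ 1 * χ 1 * (a + ψ 1 * χ 1 * e))
      (b' - χ 1 * (ψ 1 * b - χ 1 * c)) (c' - -(ψ 1 * (ψ 1 * b - χ 1 * c)))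
      (e' - (a + ψ 1 * χ 1 * e)) ∈ idealPQ 2 := by
    convert add_mem h (SS_mul_normalForm_sub_mem_idealPQ a b c e) using 1
    simp only [normalForm]
    ring
  simpa only [sub_eq_zero] using (normalForm_mem_idealPQ_iff
    (sub_mem ha' (mul_mem (mul_mem hψ hχ) hT)) (sub_mem hb' (mul_mem hχ hD))
    (sub_mem hc' (neg_mem (mul_mem hψ hD))) (sub_mem he' hT)).1 hdiff

lemma exists_sub_normalForm_mem_idealPQ_of_SS_mul_mem {f : R3 2} (hf : SS 2 * f ∈ idealPQ 2) :
    ∃ k ∈ coefRing2, ∃ e ∈ coefRing2,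
      f - normalForm (-(ψ 1 * χ 1 * e)) (χ 1 * k) (ψ 1 * k) e ∈ idealPQ 2 := by
  obtain ⟨a, ha, b, hb, c, hc, e, he, hnf⟩ := exists_sub_normalForm_mem_idealPQ f
  have hS : normalForm 0 0 0 0 - SS 2 * normalForm a b c e ∈ idealPQ 2 := by
    convert sub_mem (Ideal.mul_mem_left _ (SS 2) hnf) hf using 1
    simp only [normalForm]
    ring
  obtain ⟨-, hD, -, hT⟩ := eq_of_normalForm_sub_SS_mul_normalForm_mem_idealPQ ha hb hc he
    (zero_mem _) (zero_mem _) (zero_mem _) (zero_mem _) hS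
  have hbc : ψ 1 * b = χ 1 * c :=
    sub_eq_zero.1 ((mul_eq_zero.1 hD.symm).resolve_left (X_ne_zero _))
  obtain ⟨k, hk, rfl, rfl⟩ := exists_of_ψ_one_mul_eq_χ_one_mul hb hbc
  obtain rfl : a = -(ψ 1 * χ 1 * e) := by linear_combination -hT
  exact ⟨k, hk, e, he, hnf⟩

lemma exists_sub_mem_idealPQS (f : R3 2) :
    ∃ a ∈ coefRing2, ∃ b ∈ coefRing2, ∃ c ∈ coefRing2,
      f - (a + (b * ψ 0 + c * χ 0)) ∈ idealPQS 2 := by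
  obtain ⟨a, ha, b, hb, c, hc, e, he, hnf⟩ := exists_sub_normalForm_mem_idealPQ f
  refine ⟨a - ψ 1 * χ 1 * e,
    sub_mem ha (mul_mem (mul_mem ψ_one_mem_coefRing2 χ_one_mem_coefRing2) he),
    b, hb, c, hc, mem_idealPQS_iff.2 ⟨e, ?_⟩⟩
  convert hnf using 1
  rw [SS_two, normalForm]
  ring

lemma xidot_zero_one_mul_mem_idealPQS (p q : R3 2) :
    xidot 0 1 * (p * ψ 1 + q * χ 1) ∈ idealPQS 2 := by
  refine mem_idealPQS_iff.2 ⟨normalForm 0 p (-q) 0, ?_⟩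
  convert neg_mem (SS_mul_normalForm_sub_mem_idealPQ 0 p (-q) 0) using 1
  simp only [normalForm, xidot]
  ring

lemma mem_idealPQS_iff_exists_xidot (ha : a ∈ coefRing2) (hb : b ∈ coefRing2)
    (hc : c ∈ coefRing2) :
    a + (b * ψ 0 + c * χ 0) ∈ idealPQS 2 ↔ a = 0 ∧ ∃ p ∈ coefRing2, ∃ q ∈ coefRing2,
      b * ψ 0 + c * χ 0 = xidot 0 1 * (p * ψ 1 + q * χ 1) := by
  constructor
  · intro h
    obtain ⟨g, hg⟩ := mem_idealPQS_iff.1 h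
    obtain ⟨r, hr, s, hs, t, ht, w, hw, hnf⟩ := exists_sub_normalForm_mem_idealPQ g
    have hS : normalForm a b c 0 - SS 2 * normalForm r s t w ∈ idealPQ 2 := by
      convert add_mem hg (Ideal.mul_mem_left _ (SS 2) hnf) using 1
      rw [normalForm]
      ring
    obtain ⟨haT, hbD, hcD, hT⟩ := eq_of_normalForm_sub_SS_mul_normalForm_mem_idealPQ hr hs ht hw
      ha hb hc (zero_mem _) hS
    refine ⟨by rw [haT, ← hT, mul_zero], s, hs, -t, neg_mem ht, ?_⟩
    rw [hbD, hcD, xidot]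
    ring
  · rintro ⟨rfl, p, -, q, -, h⟩
    rw [zero_add, h]
    exact xidot_zero_one_mul_mem_idealPQS p q

end NormalForm

section Cohomology

/-- The cocycle `r + Θ₁₂ b₁ + (Θ₁₁ − Θ₂₂) b₂`, the shape of the representatives of the
cohomology for `N = 2`. -/
def ghostCocycle (r b₁ b₂ : R3 2) : Om3 2 :=
  ofR3 r + b₁ • Theta 0 1 + b₂ • (Theta 0 0 - Theta 1 1)

lemma d3_Theta_zero_one : d3 (Theta (0 : Fin 2) 1) = 0 := by
  have hsum : ∑ k : Fin 2, xidot 0 k * xidot 1 k = 0 := by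
    rw [Fin.sum_univ_two, xidot_self, xidot_self, zero_mul, mul_zero, add_zero]
  rw [d3_Theta, hsum, mul_zero, neg_zero]
  ext1 j
  fin_cases j <;> rfl

lemma d3_Theta_zero_zero_sub_one_one : d3 (Theta (0 : Fin 2) 0 - Theta 1 1) = 0 := by
  have hsum : ∑ k : Fin 2, xidot 0 k * xidot 0 k = ∑ k : Fin 2, xidot 1 k * xidot 1 k := by
    rw [Fin.sum_univ_two, Fin.sum_univ_two, xidot_self, xidot_self, xidot_swap 1 0]
    ring
  rw [d3_sub, d3_Theta, d3_Theta, hsum, sub_self]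

lemma d3_ghostCocycle (r b₁ b₂ : R3 2) : d3 (ghostCocycle r b₁ b₂) = 0 := by
  change d3LinearMap 2 (ofR3 r + b₁ • Theta 0 1 + b₂ • (Theta 0 0 - Theta 1 1)) = 0
  rw [map_add, map_add, map_smul, map_smul]
  change d3 _ + b₁ • d3 _ + b₂ • d3 _ = 0
  rw [d3_ofR3, d3_Theta_zero_one, d3_Theta_zero_zero_sub_one_one, smul_zero, smul_zero,
    add_zero, add_zero]

lemma ghostCocycle_apply_zero (r b₁ b₂ : R3 2) : ghostCocycle r b₁ b₂ 0 = r := by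
  simp [ghostCocycle, ofR3, Theta]

lemma ghostCocycle_apply_three (r b₁ b₂ : R3 2) :
    ghostCocycle r b₁ b₂ 3 = normalForm (-(ψ 1 * χ 1 * (2 * C Complex.I * b₂)))
      (χ 1 * (C Complex.I * b₁)) (ψ 1 * (C Complex.I * b₁)) (2 * C Complex.I * b₂) := by
  simp only [ghostCocycle, ofR3, Theta, normalForm, Pi.add_apply, Pi.sub_apply, Pi.smul_apply,
    smul_eq_mul, Matrix.cons_val]
  ring

lemma exists_ghostCocycle_apply_three_eq {k e : R3 2} (hk : k ∈ coefRing2)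
    (he : e ∈ coefRing2) (r : R3 2) : ∃ b₁ ∈ coefRing2, ∃ b₂ ∈ coefRing2,
      ghostCocycle r b₁ b₂ 3 = normalForm (-(ψ 1 * χ 1 * e)) (χ 1 * k) (ψ 1 * k) e := by
  have C_mul_C_inv : ∀ z : ℂ, z ≠ 0 → (C z : R3 2) * C z⁻¹ = 1 := fun z hz => by
    rw [← C_mul, mul_inv_cancel₀ hz, C_1]
  refine ⟨C Complex.I⁻¹ * k, mul_mem (C_mem_coefRing2 _) hk,
    C (2 * Complex.I)⁻¹ * e, mul_mem (C_mem_coefRing2 _) he, ?_⟩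
  have hk' : C Complex.I * (C Complex.I⁻¹ * k) = k := by
    rw [← mul_assoc, C_mul_C_inv _ Complex.I_ne_zero, one_mul]
  have he' : 2 * C Complex.I * (C (2 * Complex.I)⁻¹ * e) = e := by
    rw [← map_ofNat C 2, ← C_mul, ← mul_assoc, C_mul_C_inv _ (by simp), one_mul]
  rw [ghostCocycle_apply_three, hk', he']

lemma ghostCocycle_apply_three_mem_idealPQ_iff {b₁ b₂ : R3 2} (hb₁ : b₁ ∈ coefRing2)
    (hb₂ : b₂ ∈ coefRing2) (r : R3 2) :
    ghostCocycle r b₁ b₂ 3 ∈ idealPQ 2 ↔ b₁ = 0 ∧ b₂ = 0 := by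
  have hψ := ψ_one_mem_coefRing2
  have hχ := χ_one_mem_coefRing2
  have hk : C Complex.I * b₁ ∈ coefRing2 := mul_mem (C_mem_coefRing2 _) hb₁
  have he : 2 * C Complex.I * b₂ ∈ coefRing2 :=
    mul_mem (mul_mem (ofNat_mem _ 2) (C_mem_coefRing2 _)) hb₂
  have hχ0 : (χ 1 : R3 2) ≠ 0 := X_ne_zero _
  rw [ghostCocycle_apply_three, normalForm_mem_idealPQ_iff (neg_mem (mul_mem (mul_mem hψ hχ) he))
    (mul_mem hχ hk) (mul_mem hψ hk) he]
  constructor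
  · rintro ⟨-, h₁, -, h₂⟩
    exact ⟨by simpa [hχ0] using h₁, by simpa using h₂⟩
  · rintro ⟨rfl, rfl⟩
    simp

theorem d3_eq_zero_iff_exists_equiv3_ghostCocycle (ω : Om3 2) :
    d3 ω = 0 ↔ ∃ a ∈ coefRing2, ∃ b ∈ coefRing2, ∃ c ∈ coefRing2,
      ∃ b₁ ∈ coefRing2, ∃ b₂ ∈ coefRing2,
        Equiv3 ω (ghostCocycle (a + (b * ψ 0 + c * χ 0)) b₁ b₂) := by
  constructor
  · intro hω
    obtain ⟨a, ha, b, hb, c, hc, h0⟩ := exists_sub_mem_idealPQS (ω 0)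
    obtain ⟨k, hk, e, he, h3⟩ :=
      exists_sub_normalForm_mem_idealPQ_of_SS_mul_mem (SS_mul_mem_idealPQ_of_d3_eq_zero hω)
    obtain ⟨b₁, hb₁, b₂, hb₂, h⟩ :=
      exists_ghostCocycle_apply_three_eq hk he (a + (b * ψ 0 + c * χ 0))
    refine ⟨a, ha, b, hb, c, hc, b₁, hb₁, b₂, hb₂,
      (equiv3_iff hω (d3_ghostCocycle _ _ _)).2 ⟨?_, ?_⟩⟩
    · rwa [ghostCocycle_apply_zero]
    · rwa [h]
  · rintro ⟨a, -, b, -, c, -, b₁, -, b₂, -, h⟩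
    rw [h.d3_eq, d3_ghostCocycle]

theorem ghostCocycle_equiv3_zero_iff {a b c b₁ b₂ : R3 2} (ha : a ∈ coefRing2)
    (hb : b ∈ coefRing2) (hc : c ∈ coefRing2) (hb₁ : b₁ ∈ coefRing2) (hb₂ : b₂ ∈ coefRing2) :
    Equiv3 (ghostCocycle (a + (b * ψ 0 + c * χ 0)) b₁ b₂) 0 ↔
      a = 0 ∧ b₁ = 0 ∧ b₂ = 0 ∧ ∃ p ∈ coefRing2, ∃ q ∈ coefRing2,
        b * ψ 0 + c * χ 0 = xidot 0 1 * (p * ψ 1 + q * χ 1) := by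
  rw [equiv3_iff (d3_ghostCocycle _ _ _) d3_zero]
  simp only [Pi.zero_apply, sub_zero]
  rw [ghostCocycle_apply_zero, mem_idealPQS_iff_exists_xidot ha hb hc,
    ghostCocycle_apply_three_mem_idealPQ_iff hb₁ hb₂]
  exact ⟨fun ⟨⟨h, hξ⟩, h₁, h₂⟩ => ⟨h, h₁, h₂, hξ⟩, fun ⟨h, h₁, h₂, hξ⟩ => ⟨⟨h, hξ⟩, h₁, h₂⟩⟩

end Cohomology

/-- for `N = 2` and any invertible `S` (equivalent spinor
representation), (i) `dω = 0` iff
`ω ∼ a + Σ_α ξ₁^α a_α + Θ₁₂ b₁ + (Θ₁₁ − Θ₂₂) b₂` with coefficients in `ℂ[ψ₂, χ₂]`;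
(ii) such a combination is `∼ 0` iff `a = b₁ = b₂ = 0` and
`Σ_α ξ₁^α a_α = (ξ₁·ξ₂)·(ξ₂¹d₁ + ξ₂²d₂)` for some `d₁, d₂ ∈ ℂ[ψ₂, χ₂]`. -/
theorem stmt10 (S : Matrix (Fin 2) (Fin 2) ℂ) (hS : IsUnit S.det) :
    (∀ ω : Om3 2, d3 ω = 0 ↔
      ∃ a ∈ coefRing2, ∃ a1 ∈ coefRing2, ∃ a2 ∈ coefRing2,
      ∃ b1 ∈ coefRing2, ∃ b2 ∈ coefRing2,
        Equiv3 ω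
          (ofR3 (a + xi3 S 0 0 * a1 + xi3 S 0 1 * a2)
            + b1 • Theta 0 1 + b2 • (Theta 0 0 - Theta 1 1)))
    ∧
    (∀ a a1 a2 b1 b2 : R3 2,
      a ∈ coefRing2 → a1 ∈ coefRing2 → a2 ∈ coefRing2 →
      b1 ∈ coefRing2 → b2 ∈ coefRing2 →
      (Equiv3
        ((ofR3 (a + xi3 S 0 0 * a1 + xi3 S 0 1 * a2)
          + b1 • Theta 0 1 + b2 • (Theta 0 0 - Theta 1 1) : Om3 2)) 0 ↔
      (a = 0 ∧ b1 = 0 ∧ b2 = 0 ∧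
        ∃ d1 ∈ coefRing2, ∃ d2 ∈ coefRing2,
          xi3 S 0 0 * a1 + xi3 S 0 1 * a2
            = xidot 0 1 * (xi3 S 1 0 * d1 + xi3 S 1 1 * d2)))) := by
  refine ⟨fun ω => ?_, fun a a1 a2 b1 b2 ha ha1 ha2 hb1 hb2 => ?_⟩
  · rw [d3_eq_zero_iff_exists_equiv3_ghostCocycle]
    refine exists_congr fun a => and_congr_right fun _ => ?_
    simp only [add_assoc a]
    exact (exists_xi3_combination_iff coefRing2 hS 0 fun f =>
      ∃ b1 ∈ coefRing2, ∃ b2 ∈ coefRing2, Equiv3 ω (ghostCocycle (a + f) b1 b2)).symm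
  · obtain ⟨b, hb, c, hc, hξ⟩ := exists_eq_of_xi3_combination coefRing2 (i := 0) S ha1 ha2
    rw [add_assoc a, hξ]
    rw [exists_xi3_combination_iff coefRing2 hS 1 (b * ψ 0 + c * χ 0 = xidot 0 1 * ·)]
    exact ghostCocycle_equiv3_zero_iff ha hb hc hb1 hb2
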